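/- Every nonempty weakly compact set K in a real Banach space X has Property (R): every crescent of K contains a farthest point of K. -/

import Mathlib

open Metric Set Pointwise

/-- The farthest distance map `r_K(x) = sup {‖z - x‖ : z ∈ K}`. -/
noncomputable def rFar {X : Type*} [NormedAddCommGroup X] (K : Set X) (x : X) : ℝ :=
  sSup ((fun z => ‖z - x‖) '' K)

/-- `Q_K(x)`: the set of points of `K` farthest from `x`. -/
def QFar {X : Type*} [NormedAddCommGroup X] (K : Set X) (x : X) : Set X :=
  {z ∈ K | ‖z - x‖ = rFar K x}

/-- `D(K)`: the set of points admitting a farthest point in `K`. -/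
def DFar {X : Type*} [NormedAddCommGroup X] (K : Set X) : Set X :=
  {x | (QFar K x).Nonempty}

/-- `b(K)`: the set of farthest points of `K`. -/
def farPoints {X : Type*} [NormedAddCommGroup X] (K : Set X) : Set X :=
  ⋃ x ∈ DFar K, QFar K x

/-- The crescent `C(K, x, α) = {z ∈ K : ‖z - x‖ > r_K(x) - α}`. -/
def crescent {X : Type*} [NormedAddCommGroup X] (K : Set X) (x : X) (α : ℝ) : Set X :=
  {z ∈ K | rFar K x - α < ‖z - x‖}

/-- Property (R): every crescent of `K` contains a farthest point of `K`. -/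
def PropR {X : Type*} [NormedAddCommGroup X] (K : Set X) : Prop :=
  ∀ (x : X) (α : ℝ), 0 < α → ∃ z ∈ crescent K x α, z ∈ farPoints K

/-- The weak topology `σ(X, X*)` on `X`. -/
def weakTop (X : Type*) [NormedAddCommGroup X] [NormedSpace ℝ X] : TopologicalSpace X :=
  TopologicalSpace.induced (fun x => fun f : X →L[ℝ] ℝ => f x) inferInstance

/-!
The farthest distance map `r = rFar K` is convex and `1`-Lipschitz, so it has a subgradient `f` of
norm at most `1` at every `y`. If moving from `y` towards points of `K` can decrease `r` at a rate
arbitrarily close to `r y`, then `f (y - z)` comes arbitrarily close to `r y` for `z ∈ K`; hence a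
point `z` of `K` minimizing `f` satisfies `r y ≤ f (y - z) ≤ ‖z - y‖`, i.e. it is farthest from `y`.
Such `y` are generic: pushing a point `x` slightly away from an almost farthest point `z` of `K`
produces a `y` from which the step back to `x` is a steep enough descent towards `z`. By the Baire
category theorem the points admitting a farthest point are dense, and a farthest point from `y`
close to `x` is almost farthest from `x`.
-/

section FarthestDistance

variable {X : Type*} [NormedAddCommGroup X] {K : Set X}

lemma rFar_nonneg (K : Set X) (x : X) : 0 ≤ rFar K x :=
  Real.sSup_nonneg (forall_mem_image.2 fun _ _ => norm_nonneg _)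

lemma rFar_le {x : X} {a : ℝ} (ha : 0 ≤ a) (h : ∀ z ∈ K, ‖z - x‖ ≤ a) : rFar K x ≤ a :=
  Real.sSup_le (forall_mem_image.2 h) ha

lemma norm_sub_le_rFar (hK : Bornology.IsBounded K) (x : X) {z : X} (hz : z ∈ K) :
    ‖z - x‖ ≤ rFar K x := by
  obtain ⟨R, hR⟩ := hK.subset_closedBall x
  refine le_csSup ⟨R, forall_mem_image.2 fun w hw => ?_⟩ (mem_image_of_mem _ hz)
  exact mem_closedBall_iff_norm.1 (hR hw)

lemma crescent_nonempty (hne : K.Nonempty) (x : X) {α : ℝ} (hα : 0 < α) :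
    (crescent K x α).Nonempty := by
  obtain ⟨_, ⟨z, hz, rfl⟩, hlt⟩ :=
    exists_lt_of_lt_csSup (hne.image fun z => ‖z - x‖) (sub_lt_self (rFar K x) hα)
  exact ⟨z, hz, hlt⟩

lemma lipschitzWith_rFar (hK : Bornology.IsBounded K) : LipschitzWith 1 (rFar K) := by
  refine LipschitzWith.of_le_add fun x y =>
    rFar_le (add_nonneg (rFar_nonneg K y) dist_nonneg) fun z hz => ?_
  calc ‖z - x‖ ≤ ‖z - y‖ + ‖y - x‖ := norm_sub_le_norm_sub_add_norm_sub z y x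
    _ ≤ rFar K y + dist x y := by
      rw [dist_eq_norm']
      gcongr
      exact norm_sub_le_rFar hK y hz

lemma convexOn_rFar [NormedSpace ℝ X] (hK : Bornology.IsBounded K) :
    ConvexOn ℝ univ (rFar K) := by
  refine ⟨convex_univ, fun x _ y _ a b ha hb hab => rFar_le ?_ fun z hz => ?_⟩
  · have := rFar_nonneg K x
    have := rFar_nonneg K y
    positivity
  · have hdist := (convexOn_univ_dist z).2 (mem_univ x) (mem_univ y) ha hb hab
    simp only [dist_eq_norm'] at hdist
    refine hdist.trans ?_
    gcongr
    · exact norm_sub_le_rFar hK x hz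
    · exact norm_sub_le_rFar hK y hz

lemma propR_of_dense_DFar (hK : Bornology.IsBounded K) (hD : Dense (DFar K)) : PropR K := by
  intro x α hα
  obtain ⟨y, ⟨z, hz⟩, hxy⟩ := hD.exists_dist_lt x (half_pos hα)
  refine ⟨z, ⟨hz.1, ?_⟩, mem_iUnion₂.2 ⟨y, ⟨z, hz⟩, hz⟩⟩
  have hr : rFar K x ≤ rFar K y + dist x y := by
    simpa only [NNReal.coe_one, one_mul] using (lipschitzWith_rFar hK).le_add_mul x y
  have htri : ‖z - y‖ ≤ ‖z - x‖ + dist x y := by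
    simpa only [dist_eq_norm] using dist_triangle z x y
  linarith [hz.2]

end FarthestDistance

section Subgradient

lemma exists_subgradient_of_convexOn {E : Type*} [AddCommGroup E] [Module ℝ E]
    [TopologicalSpace E] [IsTopologicalAddGroup E] [ContinuousSMul ℝ E] {s : Set E} {φ : E → ℝ}
    (hs : IsOpen s) (hcont : ContinuousOn φ s) (hconv : ConvexOn ℝ s φ) {y : E} (hy : y ∈ s) :
    ∃ f : E →L[ℝ] ℝ, ∀ w ∈ s, φ y + f (w - y) ≤ φ w := by
  have hopen : IsOpen {p : E × ℝ | p.1 ∈ s ∧ φ p.1 < p.2} := by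
    have hdiff : ContinuousOn (fun p : E × ℝ => φ p.1 - p.2) (Prod.fst ⁻¹' s) :=
      (hcont.comp continuousOn_fst fun _ hp => hp).sub continuousOn_snd
    simpa only [inter_def, mem_preimage, mem_Iio, sub_neg] using
      hdiff.isOpen_inter_preimage (hs.preimage continuous_fst) (isOpen_Iio (a := (0 : ℝ)))
  obtain ⟨F, hF⟩ := geometric_hahn_banach_open_point (x := (y, φ y))
    hconv.convex_strict_epigraph hopen fun h => lt_irrefl _ h.2
  have hF_neg : ∀ w ∈ s, ∀ a, φ w < a → F (w - y, 0) + (a - φ y) * F (0, 1) < 0 := by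
    intro w hw a ha
    have hsplit : ((w - y, a - φ y) : E × ℝ) = (w - y, 0) + (a - φ y) • (0, 1) := by simp
    rw [← smul_eq_mul, ← map_smul, ← map_add, ← hsplit, ← Prod.mk_sub_mk, map_sub, sub_neg]
    exact hF (w, a) ⟨hw, ha⟩
  have hc : F (0, 1) < 0 := by
    simpa [Prod.mk_zero_zero] using hF_neg y hy (φ y + 1) (lt_add_one _)
  refine ⟨(-F (0, 1))⁻¹ • F.comp (ContinuousLinearMap.inl ℝ E ℝ), fun w hw => ?_⟩
  refine le_of_forall_gt_imp_ge_of_dense fun a ha => ?_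
  suffices (-F (0, 1))⁻¹ * F (w - y, 0) ≤ a - φ y by simpa [← le_sub_iff_add_le'] using this
  rw [inv_mul_le_iff₀ (neg_pos.2 hc)]
  linarith [hF_neg w hw a ha]

lemma subgradient_le_mul_norm {X : Type*} [NormedAddCommGroup X] [NormedSpace ℝ X] {C : NNReal}
    {φ : X → ℝ} (hφ : LipschitzWith C φ) {y : X} {f : X →L[ℝ] ℝ}
    (hf : ∀ w, φ y + f (w - y) ≤ φ w) (v : X) : f v ≤ C * ‖v‖ := by
  have hlip : φ (y + v) ≤ φ y + C * ‖v‖ := by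
    simpa using hφ.le_add_mul (y + v) y
  have hsub : φ y + f v ≤ φ (y + v) := by
    simpa only [add_sub_cancel_left] using hf (y + v)
  linarith

end Subgradient

section SteepDescent

variable {X : Type*} [NormedAddCommGroup X] [NormedSpace ℝ X] {K : Set X} {ε : ℝ} {x y z : X}

/-- The points `y` from which some step towards a point `z` of `K` decreases `rFar K` at an average
rate greater than `rFar K y - ε`, where the rate is measured with the whole way to `z` as the unit
of length. These are the dense open sets of the Baire category argument. -/
def steepDescentSet (K : Set X) (ε : ℝ) : Set X :=
  {y | ∃ z ∈ K, ∃ t : ℝ, 0 < t ∧ t * (rFar K y - ε) < rFar K y - rFar K (y + t • (z - y))}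

lemma steepDescentSet_mono (K : Set X) : Monotone (steepDescentSet K) := by
  rintro ε δ hεδ y ⟨z, hz, t, ht, hlt⟩
  refine ⟨z, hz, t, ht, hlt.trans_le' ?_⟩
  gcongr

lemma isOpen_steepDescentSet (hK : Bornology.IsBounded K) (ε : ℝ) :
    IsOpen (steepDescentSet K ε) := by
  have hr : Continuous (rFar K) := (lipschitzWith_rFar hK).continuous
  simp only [steepDescentSet, ← exists_prop, ofPred_exists]
  refine isOpen_biUnion fun z _ => isOpen_iUnion fun t => isOpen_iUnion fun _ => ?_
  exact isOpen_lt (by fun_prop) (by fun_prop)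

lemma add_smul_sub_mem_steepDescentSet (hK : Bornology.IsBounded K) {l : ℝ} (hl : 0 < l)
    (hz : z ∈ crescent K x (l / (1 + l) * ε)) : x + l • (x - z) ∈ steepDescentSet K ε := by
  set y := x + l • (x - z) with hy
  have hl' : 0 < 1 + l := by positivity
  have hzy : z - y = (1 + l) • (z - x) := by rw [hy]; module
  have hback : y + (l / (1 + l)) • (z - y) = x := by
    rw [hzy, smul_smul, div_mul_cancel₀ _ hl'.ne', hy]
    module
  have hr : (1 + l) * ‖z - x‖ ≤ rFar K y := by
    simpa only [hzy, norm_smul, Real.norm_of_nonneg hl'.le] using norm_sub_le_rFar hK y hz.1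
  have hlt : (1 + l) * rFar K x - l * ε < (1 + l) * ‖z - x‖ := by
    calc (1 + l) * rFar K x - l * ε = (1 + l) * (rFar K x - l / (1 + l) * ε) := by field_simp
      _ < (1 + l) * ‖z - x‖ := by gcongr; exact hz.2
  refine ⟨z, hz.1, l / (1 + l), by positivity, ?_⟩
  rw [hback, div_mul_eq_mul_div, div_lt_iff₀ hl']
  linarith

lemma dense_steepDescentSet (hne : K.Nonempty) (hK : Bornology.IsBounded K) (hε : 0 < ε) :
    Dense (steepDescentSet K ε) := by
  refine Metric.dense_iff.2 fun x η hη => ?_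
  have hR : 0 < rFar K x + 1 := by linarith [rFar_nonneg K x]
  set l := η / (rFar K x + 1)
  have hl : 0 < l := by positivity
  obtain ⟨z, hz⟩ := crescent_nonempty hne x (α := l / (1 + l) * ε) (by positivity)
  refine ⟨x + l • (x - z), ?_, add_smul_sub_mem_steepDescentSet hK hl hz⟩
  rw [mem_ball_iff_norm, add_sub_cancel_left, norm_smul, Real.norm_of_nonneg hl.le, norm_sub_rev]
  calc l * ‖z - x‖ ≤ l * rFar K x := by gcongr; exact norm_sub_le_rFar hK x hz.1
    _ < l * (rFar K x + 1) := by gcongr; exact lt_add_one _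
    _ = η := div_mul_cancel₀ η hR.ne'

lemma exists_sub_lt_subgradient_of_mem_steepDescentSet (hy : y ∈ steepDescentSet K ε)
    {f : X →L[ℝ] ℝ} (hf : ∀ w, rFar K y + f (w - y) ≤ rFar K w) :
    ∃ z ∈ K, rFar K y - ε < f (y - z) := by
  obtain ⟨z, hz, t, ht, hlt⟩ := hy
  refine ⟨z, hz, lt_of_mul_lt_mul_left (hlt.trans_le ?_) ht.le⟩
  have hstep : rFar K y + t * f (z - y) ≤ rFar K (y + t • (z - y)) := by
    simpa only [add_sub_cancel_left, map_smul, smul_eq_mul] using hf (y + t • (z - y))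
  rw [← neg_sub z y, map_neg]
  linarith

lemma mem_DFar_of_forall_mem_steepDescentSet (hK : Bornology.IsBounded K)
    (hmin : ∀ f : X →L[ℝ] ℝ, ∃ z ∈ K, IsMinOn f K z)
    (hy : ∀ ε > 0, y ∈ steepDescentSet K ε) : y ∈ DFar K := by
  have hlip := lipschitzWith_rFar hK
  obtain ⟨f, hf⟩ := exists_subgradient_of_convexOn isOpen_univ hlip.continuous.continuousOn
    (convexOn_rFar hK) (mem_univ y)
  replace hf : ∀ w, rFar K y + f (w - y) ≤ rFar K w := fun w => hf w (mem_univ w)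
  obtain ⟨z, hz, hzmin⟩ := hmin f
  refine ⟨z, hz, (norm_sub_le_rFar hK y hz).antisymm ?_⟩
  calc rFar K y ≤ f (y - z) := by
        refine le_of_forall_pos_le_add fun ε hε => ?_
        obtain ⟨w, hw, hlt⟩ := exists_sub_lt_subgradient_of_mem_steepDescentSet (hy ε hε) hf
        have hzw : f z ≤ f w := hzmin hw
        rw [map_sub] at hlt ⊢
        linarith
    _ ≤ ‖y - z‖ := by simpa using subgradient_le_mul_norm hlip hf (y - z)
    _ = ‖z - y‖ := norm_sub_rev y z

end SteepDescent

section Attainment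

lemma isBounded_of_forall_isBounded_image_dual (𝕜 : Type*) {E : Type*} [RCLike 𝕜]
    [NormedAddCommGroup E] [NormedSpace 𝕜 E] {K : Set E}
    (h : ∀ f : E →L[𝕜] 𝕜, Bornology.IsBounded (f '' K)) : Bornology.IsBounded K := by
  have hpointwise (f : E →L[𝕜] 𝕜) :
      ∃ C, ∀ z : K, ‖NormedSpace.inclusionInDoubleDualLi 𝕜 (z : E) f‖ ≤ C := by
    obtain ⟨C, hC⟩ := (h f).exists_norm_le
    exact ⟨C, fun z => hC _ (mem_image_of_mem f z.2)⟩
  obtain ⟨C, hC⟩ := banach_steinhaus hpointwise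
  refine isBounded_iff_forall_norm_le.2 ⟨C, fun z hz => ?_⟩
  simpa only [LinearIsometry.norm_map] using hC ⟨z, hz⟩

variable {X : Type*} [NormedAddCommGroup X] [NormedSpace ℝ X] {K : Set X}

lemma isBounded_of_forall_exists_isMinOn (hmin : ∀ f : X →L[ℝ] ℝ, ∃ z ∈ K, IsMinOn f K z) :
    Bornology.IsBounded K := by
  refine isBounded_of_forall_isBounded_image_dual ℝ fun f => ?_
  obtain ⟨a, -, ha⟩ := hmin f
  obtain ⟨b, -, hb⟩ := hmin (-f)
  refine (isBounded_Icc (f a) (f b)).subset (image_subset_iff.2 fun z hz => ⟨ha hz, ?_⟩)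
  exact neg_le_neg_iff.1 (hb hz)

lemma DFar_mem_residual (hmin : ∀ f : X →L[ℝ] ℝ, ∃ z ∈ K, IsMinOn f K z) :
    DFar K ∈ residual X := by
  have hK := isBounded_of_forall_exists_isMinOn hmin
  have hne : K.Nonempty := (hmin 0).imp fun _ => And.left
  have hgeneric : ∀ᶠ y in residual X, ∀ n : ℕ, y ∈ steepDescentSet K (1 / (n + 1)) :=
    eventually_countable_forall.2 fun n => residual_of_dense_open (isOpen_steepDescentSet hK _)
      (dense_steepDescentSet hne hK Nat.one_div_pos_of_nat)
  filter_upwards [hgeneric] with y hy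
  refine mem_DFar_of_forall_mem_steepDescentSet hK hmin fun ε hε => ?_
  obtain ⟨n, hn⟩ := exists_nat_one_div_lt hε
  exact steepDescentSet_mono K hn.le (hy n)

lemma exists_isMinOn_of_isCompact_weakTop (hne : K.Nonempty) (hK : @IsCompact X (weakTop X) K)
    (f : X →L[ℝ] ℝ) : ∃ z ∈ K, IsMinOn f K z := by
  -- Introduced before the local instance, so that `X →L[ℝ] ℝ` is the dual for the norm topology.
  let evaluation (x : X) (g : X →L[ℝ] ℝ) : ℝ := g x
  let := weakTop X
  have hevaluation : Continuous evaluation := continuous_induced_dom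
  have hf : Continuous f := (continuous_apply f).comp hevaluation
  exact hK.exists_isMinOn hne hf.continuousOn

end Attainment

theorem stmt_8_general {X : Type*} [NormedAddCommGroup X] [NormedSpace ℝ X] [CompleteSpace X]
    (K : Set X) (hmin : ∀ f : X →L[ℝ] ℝ, ∃ z ∈ K, IsMinOn f K z) : PropR K :=
  propR_of_dense_DFar (isBounded_of_forall_exists_isMinOn hmin)
    (dense_of_mem_residual (DFar_mem_residual hmin))

/-- Every nonempty weakly compact set has Property (R). -/
theorem stmt_8 {X : Type*} [NormedAddCommGroup X] [NormedSpace ℝ X] [CompleteSpace X]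
    (K : Set X) (hne : K.Nonempty) (hK : @IsCompact X (weakTop X) K) :
    PropR K :=
  stmt_8_general K (exists_isMinOn_of_isCompact_weakTop hne hK)
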